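/- (Kelvin transform Dirichlet energy identity.) With K the Kelvin transform K(x) = p + rs·(x−p)/|x−p|² on ℝ², let u ∈ H¹ with u = 0 on ∂B_p(2r), and define û(x) = u(K(x)) − 4 log|x−p| for |x−p| ≥ s/2, û(x) = −4 log(s/2) for |x−p| ≤ s/2. Then ∫_{B_p(2r)} |∇û|² dx = ∫_{A_p(s/2, 2r)} |∇u|² dx + 32π(log(2r) − log(s/2)) − 16π ⨍_{∂B_p(s/2)} u dS. -/

import Mathlib

open MeasureTheory Metric Real Complex

lemma norm_sq_dual (L : ℂ →L[ℝ] ℝ) (e : ℂ) (he : ‖e‖ = 1) :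
    ‖L‖ ^ 2 = L e ^ 2 + L (I * e) ^ 2 := by
  set g := (InnerProductSpace.toDual ℝ ℂ).symm L with hg
  have h1 : ∀ v, L v = inner ℝ g v := fun v => by simp [hg]
  have h2 : ‖L‖ = ‖g‖ := by simp [hg]
  have he2 : e.re ^ 2 + e.im ^ 2 = 1 := by
    have := Complex.sq_norm e
    rw [he, Complex.normSq_apply] at this; linarith
  rw [h2, h1, h1, Complex.sq_norm, Complex.normSq_apply, Complex.inner, Complex.inner]
  simp
  linear_combination (-(g.re ^ 2 + g.im ^ 2)) * he2

lemma polar_annulus (p : ℂ) (a b : ℝ) (ha : 0 < a) (g : ℂ → ℝ) (h : ℝ × ℝ → ℝ)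
    (hc : ContinuousOn h (Set.Icc a b ×ˢ Set.univ)) (hab : a ≤ b)
    (hg : ∀ ρ θ : ℝ, a < ρ → ρ < b → ρ * g (p + ρ * Complex.exp (θ * I)) = h (ρ, θ)) :
    ∫ x in {x : ℂ | a < dist x p ∧ dist x p < b}, g x =
      ∫ θ in (-π)..π, ∫ ρ in a..b, h (ρ, θ) := by
  have hm : MeasurableSet {x : ℂ | a < dist x p ∧ dist x p < b} := by
    have : {x : ℂ | a < dist x p ∧ dist x p < b} = (closedBall p a)ᶜ ∩ ball p b := by
      ext x; simp
    rw [this]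
    exact isClosed_closedBall.measurableSet.compl.inter measurableSet_ball
  rw [← integral_indicator hm, ← integral_add_left_eq_self _ p,
    ← Complex.integral_comp_polarCoord_symm]
  have hS : MeasurableSet (Set.Ioo a b ×ˢ Set.Ioo (-π) π) := measurableSet_Ioo.prod measurableSet_Ioo
  have e1 : ∫ q in polarCoord.target, q.1 • ({x : ℂ | a < dist x p ∧ dist x p < b}.indicator g
      (p + Complex.polarCoord.symm q)) = ∫ q in Set.Ioo a b ×ˢ Set.Ioo (-π) π, h q := by
    have hsub : Set.Ioo a b ×ˢ Set.Ioo (-π) π ⊆ polarCoord.target := by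
      rintro ⟨ρ, θ⟩ ⟨h1, h2⟩
      exact ⟨ha.trans h1.1, h2⟩
    have hd : ∀ q ∈ polarCoord.target, dist (p + Complex.polarCoord.symm q) p = q.1 := by
      rintro ⟨ρ, θ⟩ ⟨h1, h2⟩
      have h1 : 0 < ρ := h1
      simp [abs_of_pos h1]
    rw [setIntegral_eq_of_subset_of_forall_sdiff_eq_zero
      polarCoord.open_target.measurableSet hsub]
    · apply setIntegral_congr_fun hS
      rintro ⟨ρ, θ⟩ hq
      have := hd _ (hsub hq)
      obtain ⟨h1, h2⟩ := hq
      have h1 : a < ρ ∧ ρ < b := h1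
      simp only [smul_eq_mul]
      rw [Set.indicator_of_mem (by rw [Set.mem_ofPred_eq, this]; exact h1), ← hg ρ θ h1.1 h1.2]
      simp [Complex.polarCoord_symm_apply, Complex.exp_mul_I]
    · rintro ⟨ρ, θ⟩ ⟨hq, hq'⟩
      have := hd _ hq
      rw [Set.indicator_of_notMem, smul_zero]
      intro hmem
      simp only [Set.mem_ofPred_eq, this] at hmem
      exact hq' ⟨hmem, hq.2⟩
  rw [e1]
  have hi : IntegrableOn h (Set.Ioo a b ×ˢ Set.Ioo (-π) π) (volume.prod volume) := by
    have : IntegrableOn h (Set.Icc a b ×ˢ Set.Icc (-π) π) :=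
      (hc.mono (Set.prod_mono subset_rfl (Set.subset_univ _))).integrableOn_compact
        (isCompact_Icc.prod isCompact_Icc)
    exact this.mono_set (Set.prod_mono Set.Ioo_subset_Icc_self Set.Ioo_subset_Icc_self)
  rw [IntegrableOn, ← Measure.prod_restrict] at hi
  rw [Measure.volume_eq_prod, ← Measure.prod_restrict, integral_prod_symm _ hi,
    intervalIntegral.integral_of_le (by linarith [pi_pos]), integral_Ioc_eq_integral_Ioo]
  simp_rw [intervalIntegral.integral_of_le hab, integral_Ioc_eq_integral_Ioo]

lemma kelvin_deriv (p : ℂ) (s r : ℝ) (u : ℂ → ℝ) (hu : ContDiff ℝ 1 u) (hs : 0 < s)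
    (ρ θ : ℝ) (hρ : s / 2 < ρ) :
    ‖fderiv ℝ (fun y : ℂ =>
          if s / 2 ≤ dist y p then
            u (p + ((r * s) / dist y p ^ 2) • (y - p)) - 4 * Real.log (dist y p)
          else -4 * Real.log (s / 2)) (p + ρ * Complex.exp (θ * I))‖ ^ 2 =
      (r * s / ρ ^ 2) ^ 2 * ‖fderiv ℝ u (p + (r * s / ρ : ℝ) * Complex.exp (θ * I))‖ ^ 2
      + 8 * (r * s) / ρ ^ 3 * fderiv ℝ u (p + (r * s / ρ : ℝ) * Complex.exp (θ * I)) (Complex.exp (θ * I))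
      + 16 / ρ ^ 2 := by
  set e := Complex.exp (θ * I) with he
  have hen : ‖e‖ = 1 := Complex.norm_exp_ofReal_mul_I θ
  have he0 : e ≠ 0 := Complex.exp_ne_zero _
  have hρ0 : 0 < ρ := by linarith
  have hρc : (ρ : ℂ) ≠ 0 := by exact_mod_cast hρ0.ne'
  have hce : (starRingEnd ℂ) e * e = 1 := by
    rw [mul_comm, Complex.mul_conj, Complex.normSq_eq_norm_sq, hen]; simp
  have hce0 : (starRingEnd ℂ) e ≠ 0 := by simpa using he0
  set x := p + ρ * e with hx
  have hxd : dist x p = ρ := by simp [hx, hen, abs_of_pos hρ0]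
  have hxp : x - p = ρ * e := by simp [hx]
  have hev : (fun y : ℂ =>
          if s / 2 ≤ dist y p then
            u (p + ((r * s) / dist y p ^ 2) • (y - p)) - 4 * Real.log (dist y p)
          else -4 * Real.log (s / 2)) =ᶠ[nhds x] fun y =>
      u (p + (r * s : ℝ) * ((starRingEnd ℂ) (y - p))⁻¹) - 2 * Real.log (‖y - p‖ ^ 2) := by
    have : ∀ᶠ y in nhds x, s / 2 < dist y p := by
      apply ContinuousAt.eventually_lt continuousAt_const (by fun_prop)
      rw [hxd]; exact hρ
    filter_upwards [this] with y hy
    rw [if_pos hy.le, Real.log_pow, dist_eq_norm]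
    have h0 : y - p ≠ 0 := by
      rw [← norm_pos_iff, ← dist_eq_norm]; linarith
    have : ((r * s) / ‖y - p‖ ^ 2 : ℝ) • (y - p) = (r * s : ℝ) * ((starRingEnd ℂ) (y - p))⁻¹ := by
      have h1 : (starRingEnd ℂ) (y - p) ≠ 0 := (map_ne_zero _).2 h0
      have h2 : ((‖y - p‖ ^ 2 : ℝ) : ℂ) = (y - p) * (starRingEnd ℂ) (y - p) := by
        rw [Complex.mul_conj, Complex.normSq_eq_norm_sq]
      rw [Complex.real_smul, Complex.ofReal_div, h2]
      field_simp
    rw [this]; push_cast; ring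
  rw [hev.fderiv_eq]
  have hKx : p + (r * s : ℝ) * ((starRingEnd ℂ) (x - p))⁻¹ = p + (r * s / ρ : ℝ) * e := by
    rw [hxp]
    simp only [map_mul, Complex.conj_ofReal, Complex.ofReal_div]
    field_simp
    linear_combination (- (↑(r * s) : ℂ)) * hce
  set L := fderiv ℝ u (p + (r * s / ρ : ℝ) * e) with hL
  -- directional derivatives
  have hdiff : DifferentiableAt ℝ (fun y =>
      u (p + (r * s : ℝ) * ((starRingEnd ℂ) (y - p))⁻¹) - 2 * Real.log (‖y - p‖ ^ 2)) x := by
    have hxn : x - p ≠ 0 := by rw [hxp]; exact mul_ne_zero hρc he0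
    have hud : Differentiable ℝ u := hu.differentiable (by norm_num)
    have hcj : DifferentiableAt ℝ (fun y : ℂ => (starRingEnd ℂ) (y - p)) x :=
      (Complex.conjCLE.differentiable.differentiableAt).comp x (by fun_prop)
    have h3 : DifferentiableAt ℝ (fun y : ℂ => ((starRingEnd ℂ) (y - p))⁻¹) x :=
      hcj.inv ((map_ne_zero _).2 hxn)
    refine DifferentiableAt.sub ?_ ?_
    · exact hud.differentiableAt.comp x (by fun_prop)
    · refine (DifferentiableAt.log ?_ ?_).const_mul 2
      · exact DifferentiableAt.norm_sq ℝ (by fun_prop)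
      · have := norm_pos_iff.2 hxn; positivity
  have key : ∀ v : ℂ, fderiv ℝ (fun y =>
      u (p + (r * s : ℝ) * ((starRingEnd ℂ) (y - p))⁻¹) - 2 * Real.log (‖y - p‖ ^ 2)) x v =
      L (-(r * s : ℝ) * (starRingEnd ℂ) v * ((starRingEnd ℂ) (x - p) ^ 2)⁻¹)
        - 4 * inner ℝ (x - p) v / ρ ^ 2 := by
    intro v
    have hl : HasDerivAt (fun t : ℝ => x + t • v) v 0 := by
      simpa using ((hasDerivAt_id (0:ℝ)).smul_const v).const_add x
    have hA := HasFDerivAt.comp_hasDerivAt_of_eq (0:ℝ) hdiff.hasFDerivAt hl (by simp)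
    have hcv : HasDerivAt (fun t : ℝ => (starRingEnd ℂ) (x + t • v - p)) ((starRingEnd ℂ) v) 0 := by
      have := Complex.conjCLE.hasFDerivAt.comp_hasDerivAt (0:ℝ) (hl.sub_const p)
      exact this
    have hK : HasDerivAt (fun t : ℝ => p + (r * s : ℝ) * ((starRingEnd ℂ) (x + t • v - p))⁻¹)
        ((r * s : ℝ) * (-(starRingEnd ℂ) v / ((starRingEnd ℂ) (x - p)) ^ 2)) 0 := by
      have := ((hcv.inv (by simp [hxp, hρc, he0])).const_mul ((r * s : ℝ) : ℂ)).const_add p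
      simpa using this
    have hU := HasFDerivAt.comp_hasDerivAt_of_eq (l := u) (l' := L) (0:ℝ)
      ((hu.differentiable (by norm_num)).differentiableAt.hasFDerivAt) hK (by rw [zero_smul, add_zero, hKx])
    have hN : HasDerivAt (fun t : ℝ => ‖x + t • v - p‖ ^ 2) (2 * inner ℝ (x - p) v) 0 := by
      simpa using (hl.sub_const p).norm_sq
    have hLg := (hN.log (by simp [hxp, hρ0.ne', he0])).const_mul 2
    have hB := hU.sub hLg
    have := hA.unique hB
    rw [this]
    have hn : ‖x - p‖ = ρ := by rw [← dist_eq_norm, hxd]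
    congr 1
    · congr 1; field_simp
    · simp [hn]; ring
  rw [norm_sq_dual _ e hen, key, key, norm_sq_dual L e hen]
  have a1 : -(r * s : ℝ) * (starRingEnd ℂ) e * ((starRingEnd ℂ) (x - p) ^ 2)⁻¹ =
      (-(r * s / ρ ^ 2) : ℝ) • e := by
    rw [hxp]
    simp only [map_mul, Complex.conj_ofReal, Complex.real_smul]
    push_cast
    field_simp
    linear_combination ((r * s : ℂ)) * hce
  have a2 : -(r * s : ℝ) * (starRingEnd ℂ) (I * e) * ((starRingEnd ℂ) (x - p) ^ 2)⁻¹ =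
      (r * s / ρ ^ 2 : ℝ) • (I * e) := by
    rw [hxp]
    simp only [map_mul, Complex.conj_ofReal, Complex.real_smul, Complex.conj_I]
    push_cast
    field_simp
    linear_combination (-(r * s : ℂ)) * hce
  have b1 : inner ℝ (x - p) e = ρ := by
    rw [hxp, ← Complex.real_smul, inner_smul_left, real_inner_self_eq_norm_sq, hen]; simp
  have b2 : inner ℝ (x - p) (I * e) = 0 := by
    rw [hxp, ← Complex.real_smul, inner_smul_left, Complex.inner]; simp; right; ring
  rw [a1, a2, b1, b2, map_smul, map_smul]
  simp only [smul_eq_mul]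
  field_simp
  ring

set_option maxHeartbeats 1000000 in
theorem stmt8 (p : ℂ) (s r : ℝ) (hs : 0 < s) (hsr : s < r)
    (u : ℂ → ℝ) (hu : ContDiff ℝ 1 u)
    (hu0 : ∀ x ∈ sphere p (2 * r), u x = 0)
    (hint : IntegrableOn (fun y => ‖fderiv ℝ u y‖ ^ 2)
      {x : ℂ | s / 2 < dist x p ∧ dist x p < 2 * r}) :
    (∫ x in ball p (2 * r),
        ‖fderiv ℝ (fun y : ℂ =>
          if s / 2 ≤ dist y p then
            u (p + ((r * s) / dist y p ^ 2) • (y - p)) - 4 * Real.log (dist y p)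
          else -4 * Real.log (s / 2)) x‖ ^ 2) =
      (∫ x in {x : ℂ | s / 2 < dist x p ∧ dist x p < 2 * r}, ‖fderiv ℝ u x‖ ^ 2) +
        32 * Real.pi * (Real.log (2 * r) - Real.log (s / 2)) -
        16 * Real.pi *
          ((2 * Real.pi)⁻¹ * ∫ θ in (0 : ℝ)..(2 * Real.pi),
            u (p + (s / 2) * Complex.exp (θ * I))) := by
  have hr : 0 < r := hs.trans hsr
  have hab : s / 2 ≤ 2 * r := by linarith
  have ha : 0 < s / 2 := by linarith
  have hDu : Continuous (fderiv ℝ u) := hu.continuous_fderiv (by norm_num)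
  have huc : Continuous u := hu.continuous
  have hsub : {x : ℂ | s / 2 < dist x p ∧ dist x p < 2 * r} ⊆ ball p (2 * r) := fun x hx => hx.2
  rw [setIntegral_eq_of_subset_of_ae_sdiff_eq_zero measurableSet_ball.nullMeasurableSet hsub]
  swap
  · have hsph : ∀ᵐ x : ℂ, x ∉ sphere p (s / 2) :=
      measure_eq_zero_iff_ae_notMem.1 (Measure.addHaar_sphere volume p (s / 2))
    filter_upwards [hsph] with x hx hx2
    have hlt : dist x p < s / 2 := by
      by_contra hcon
      have h1 : s / 2 < dist x p := lt_of_le_of_ne (not_lt.1 hcon) (fun h => hx h.symm)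
      exact hx2.2 ⟨h1, hx2.1⟩
    have hev : (fun y : ℂ =>
          if s / 2 ≤ dist y p then
            u (p + ((r * s) / dist y p ^ 2) • (y - p)) - 4 * Real.log (dist y p)
          else -4 * Real.log (s / 2)) =ᶠ[nhds x] fun _ => -4 * Real.log (s / 2) := by
      have : ∀ᶠ y in nhds x, dist y p < s / 2 :=
        ContinuousAt.eventually_lt (by fun_prop) continuousAt_const hlt
      filter_upwards [this] with y hy
      rw [if_neg (not_le.2 hy)]
    rw [hev.fderiv_eq]
    simp
  set G : ℝ → ℝ → ℝ := fun t θ => ‖fderiv ℝ u (p + t * Complex.exp (θ * I))‖ ^ 2 with hG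
  set D : ℝ → ℝ → ℝ := fun t θ => fderiv ℝ u (p + t * Complex.exp (θ * I)) (Complex.exp (θ * I))
    with hD
  have hGc : Continuous (fun q : ℝ × ℝ => G q.1 q.2) := by
    simp only [hG]; fun_prop
  have hDc : Continuous (fun q : ℝ × ℝ => D q.1 q.2) := by
    simp only [hD]; fun_prop
  have hinv : ContinuousOn (fun ρ : ℝ => r * s / ρ) (Set.Icc (s / 2) (2 * r)) :=
    continuousOn_const.div continuousOn_id (fun x hx => (ha.trans_le hx.1).ne')
  have hinv2 : ContinuousOn (fun q : ℝ × ℝ => (r * s / q.1, q.2))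
      (Set.Icc (s / 2) (2 * r) ×ˢ Set.univ) :=
    (hinv.comp continuousOn_fst (fun q hq => hq.1)).prodMk continuousOn_snd
  have hGi := hGc.comp_continuousOn hinv2
  have hDi := hDc.comp_continuousOn hinv2
  have hne : ∀ q ∈ Set.Icc (s / 2) (2 * r) ×ˢ (Set.univ : Set ℝ), q.1 ≠ 0 :=
    fun q hq => (ha.trans_le hq.1.1).ne'
  rw [polar_annulus p (s / 2) (2 * r) ha _ (fun q => ((r * s) ^ 2 / q.1 ^ 3) * G (r * s / q.1) q.2
      + 8 * ((r * s) / q.1 ^ 2 * D (r * s / q.1) q.2) + 16 * (1 / q.1)) ?_ hab ?_,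
    polar_annulus p (s / 2) (2 * r) ha _ (fun q => q.1 * G q.1 q.2) ?_ hab ?_]
  rotate_left
  · exact (continuous_fst.mul hGc).continuousOn
  · intro ρ θ _ _; rfl
  · refine ((ContinuousOn.mul ?_ hGi).add (continuousOn_const.mul (ContinuousOn.mul ?_ hDi))).add
      (continuousOn_const.mul ?_)
    · exact continuousOn_const.div (by fun_prop) (fun q hq => pow_ne_zero _ (hne q hq))
    · exact continuousOn_const.div (by fun_prop) (fun q hq => pow_ne_zero _ (hne q hq))
    · exact continuousOn_const.div (by fun_prop) hne
  · intro ρ θ h1 h2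
    have hρ : 0 < ρ := by linarith
    rw [kelvin_deriv p s r u hu hs ρ θ h1]
    simp only [hG, hD]
    field_simp
  have inner : ∀ θ : ℝ, (∫ ρ in (s / 2)..(2 * r), ((r * s) ^ 2 / ρ ^ 3) * G (r * s / ρ) θ
      + 8 * ((r * s) / ρ ^ 2 * D (r * s / ρ) θ) + 16 * (1 / ρ)) =
      (∫ ρ in (s / 2)..(2 * r), ρ * G ρ θ) + (16 * (Real.log (2 * r) - Real.log (s / 2))
        - 8 * u (p + (s / 2) * Complex.exp (θ * I))) := by
    intro θ
    have hu1 : Set.uIcc (s / 2) (2 * r) = Set.Icc (s / 2) (2 * r) := Set.uIcc_of_le hab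
    have hn1 : ∀ x ∈ Set.uIcc (s / 2) (2 * r), x ≠ 0 := fun x hx => by
      rw [hu1] at hx; exact (ha.trans_le hx.1).ne'
    have hder : ∀ x ∈ Set.uIcc (s / 2) (2 * r),
        HasDerivAt (fun ρ : ℝ => r * s / ρ) (-(r * s) / x ^ 2) x := fun x hx => by
      have := (hasDerivAt_inv (hn1 x hx)).const_mul (r * s)
      simp only [div_eq_mul_inv]
      exact this.congr_deriv (by ring)
    have hinv' := hinv
    rw [← hu1] at hinv'
    have hGθ : Continuous (fun t => G t θ) := by
      simp only [hG]; fun_prop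
    have hDθ : Continuous (fun t => D t θ) := by
      simp only [hD]; fun_prop
    have c1 : ContinuousOn (fun ρ => ((r * s) ^ 2 / ρ ^ 3) * G (r * s / ρ) θ)
        (Set.uIcc (s / 2) (2 * r)) :=
      (continuousOn_const.div (by fun_prop) (fun q hq => pow_ne_zero _ (hn1 q hq))).mul
        (hGθ.comp_continuousOn hinv')
    have c2 : ContinuousOn (fun ρ => (r * s) / ρ ^ 2 * D (r * s / ρ) θ)
        (Set.uIcc (s / 2) (2 * r)) :=
      (continuousOn_const.div (by fun_prop) (fun q hq => pow_ne_zero _ (hn1 q hq))).mul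
        (hDθ.comp_continuousOn hinv')
    have c3 : ContinuousOn (fun ρ : ℝ => 1 / ρ) (Set.uIcc (s / 2) (2 * r)) :=
      continuousOn_const.div (by fun_prop) hn1
    have ea : r * s / (s / 2) = 2 * r := by field_simp
    have eb : r * s / (2 * r) = s / 2 := by field_simp
    have i1 : ∫ ρ in (s / 2)..(2 * r), ((r * s) ^ 2 / ρ ^ 3) * G (r * s / ρ) θ =
        ∫ ρ in (s / 2)..(2 * r), ρ * G ρ θ := by
      have := intervalIntegral.integral_comp_mul_deriv (a := s / 2) (b := 2 * r)
        (f := fun ρ : ℝ => r * s / ρ) (f' := fun x => -(r * s) / x ^ 2)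
        (g := fun t => t * G t θ) hder
        (continuousOn_const.div (by fun_prop) (fun q hq => pow_ne_zero _ (hn1 q hq)))
        (continuous_id.mul hGθ)
      simp only [ea, eb] at this
      rw [intervalIntegral.integral_symm (s / 2) (2 * r) (f := fun t => t * G t θ),
        ← neg_eq_iff_eq_neg, ← intervalIntegral.integral_neg] at this
      rw [← this]
      apply intervalIntegral.integral_congr
      intro x hx
      have := hn1 x hx
      simp only [Function.comp]
      field_simp
    have i2 : ∫ ρ in (s / 2)..(2 * r), (r * s) / ρ ^ 2 * D (r * s / ρ) θ =
        - u (p + (s / 2) * Complex.exp (θ * I)) := by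
      have hd : ∀ x ∈ Set.uIcc (s / 2) (2 * r),
          HasDerivAt (fun ρ : ℝ => - u (p + (r * s / ρ : ℝ) * Complex.exp (θ * I)))
            ((r * s) / x ^ 2 * D (r * s / x) θ) x := by
        intro x hx
        have h1 := (((hder x hx).ofReal_comp.mul_const (Complex.exp (θ * I))).const_add p)
        have h2 := (((hu.differentiable (by norm_num)).differentiableAt.hasFDerivAt
          (x := (p + (r * s / x : ℝ) * Complex.exp (θ * I)))).comp_hasDerivAt x h1).neg
        refine h2.congr_deriv ?_
        rw [← Complex.real_smul (x := -(r * s) / x ^ 2), map_smul]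
        simp only [hD, smul_eq_mul]
        ring
      rw [intervalIntegral.integral_eq_sub_of_hasDerivAt hd c2.intervalIntegrable, ea, eb,
        hu0 (p + (2 * r : ℝ) * Complex.exp (θ * I))]
      · push_cast; ring
      · simp [Complex.norm_exp_ofReal_mul_I, abs_of_pos hr]
    have i3 : ∫ ρ in (s / 2)..(2 * r), 1 / ρ = Real.log (2 * r) - Real.log (s / 2) := by
      rw [integral_one_div_of_pos ha (by linarith), Real.log_div (by positivity) (by positivity)]
    rw [intervalIntegral.integral_add
      (c1.intervalIntegrable.add (c2.intervalIntegrable.const_mul 8))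
      (c3.intervalIntegrable.const_mul 16),
      intervalIntegral.integral_add c1.intervalIntegrable (c2.intervalIntegrable.const_mul 8),
      intervalIntegral.integral_const_mul, intervalIntegral.integral_const_mul, i1, i2, i3]
    ring
  simp only [inner]
  have hUc : Continuous (fun θ : ℝ => u (p + (s / 2) * Complex.exp (θ * I))) := by fun_prop
  have hIc : Continuous (fun θ : ℝ => ∫ ρ in (s / 2)..(2 * r), ρ * G ρ θ) := by
    apply intervalIntegral.continuous_parametric_intervalIntegral_of_continuous'
    simp only [Function.uncurry_def, hG]
    fun_prop
  rw [intervalIntegral.integral_add (hIc.intervalIntegrable _ _)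
    ((by fun_prop : Continuous _).intervalIntegrable _ _),
    intervalIntegral.integral_sub (by simp) ((by fun_prop : Continuous _).intervalIntegrable _ _),
    intervalIntegral.integral_const, intervalIntegral.integral_const_mul]
  have hper : Function.Periodic (fun θ : ℝ => u (p + (s / 2) * Complex.exp (θ * I))) (2 * π) := by
    intro θ
    have : Complex.exp (((θ + 2 * π : ℝ) : ℂ) * I) = Complex.exp (θ * I) := by
      push_cast
      rw [add_mul, Complex.exp_add, Complex.exp_two_pi_mul_I, mul_one]
    simp only [this]
  have hp := hper.intervalIntegral_add_eq (-π) 0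
  rw [show -π + 2 * π = π by ring, zero_add] at hp
  rw [hp, smul_eq_mul]
  have := pi_pos.ne'
  generalize (∫ θ in (0 : ℝ)..(2 * π), u (p + (s / 2) * Complex.exp (θ * I))) = Z
  field_simp
  ring
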